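/- arXiv:2412.01574 — 3 statements merged into one kernel-verified Lean document; each statement's English description precedes it below -/
import Mathlib

section
/- Let μ be a compactly supported Borel probability measure on ℝ and let (Q_n)_{n≥0}, (q_n)_{n≥0} be defined from μ as in the context. Fix t ≥ 1, let Φ ∈ ℝ^{t×t} be strictly lower triangular, and let Δ̄ ∈ ℝ^{t×t} be arbitrary. Define P(λ) := Σ_{i=1}^{t} Q_i(λ)·Φ^{i−1} (with Φ^0 := I_t), Σ := ∫ P(λ)·Δ̄·P(λ)ᵀ dμ(λ) (entrywise integral), and Δ := Δ̄ + Φ·Σ·Φᵀ. Then Σ = Σ_{m=1}^{t} Σ_{n=1}^{t} q_{m+n} · Φ^{m−1} · Δ · (Φ^{n−1})ᵀ. -/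
open MeasureTheory Matrix

lemma aux_rec (Q : ℕ → Polynomial ℝ) (q : ℕ → ℝ)
    (hQrec : ∀ n : ℕ, 1 ≤ n →
      Q n = Polynomial.X * Q (n - 1) - ∑ i ∈ Finset.Icc 1 n, Polynomial.C (q i) * Q (n - i))
    (n : ℕ) : Polynomial.X * Q n = Q (n + 1) + ∑ v ∈ Finset.range (n + 1), q (n + 1 - v) • Q v := by
  have h := hQrec (n + 1) (by omega)
  rw [Nat.add_sub_cancel] at h
  have h2 : ∑ i ∈ Finset.Icc 1 (n + 1), Polynomial.C (q i) * Q (n + 1 - i)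
      = ∑ v ∈ Finset.range (n + 1), q (n + 1 - v) • Q v := by
    refine Finset.sum_bij' (fun i _ => n + 1 - i) (fun v _ => n + 1 - v) ?_ ?_ ?_ ?_ ?_
    · intro i hi; simp at hi ⊢; omega
    · intro i hi; simp at hi ⊢; omega
    · intro i hi; simp at hi ⊢; omega
    · intro i hi; simp at hi ⊢; omega
    · intro i hi
      simp only [Finset.mem_Icc] at hi
      have : n + 1 - (n + 1 - i) = i := by omega
      simp only [this, Polynomial.smul_eq_C_mul]
  rw [h2] at h
  rw [h]; ring

lemma aux_mean (Q : ℕ → Polynomial ℝ) (q : ℕ → ℝ) (L : Polynomial ℝ →ₗ[ℝ] ℝ)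
    (hQ0 : Q 0 = 1) (hL1 : L 1 = 1)
    (hq : ∀ n : ℕ, q (n + 1) = L (Polynomial.X * Q n))
    (hrec : ∀ n, Polynomial.X * Q n
      = Q (n + 1) + ∑ v ∈ Finset.range (n + 1), q (n + 1 - v) • Q v)
    (n : ℕ) : L (Q (n + 1)) = 0 := by
  induction n using Nat.strong_induction_on with
  | _ n ih =>
    have h := congrArg L (hrec n)
    rw [← hq, map_add, map_sum, Finset.sum_range_succ', Finset.sum_eq_zero] at h
    · simp [hQ0, hL1] at h
      linarith
    · intro v hv
      simp only [Finset.mem_range] at hv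
      rw [map_smul, ih v hv, smul_zero]

lemma aux_cov (Q : ℕ → Polynomial ℝ) (q : ℕ → ℝ) (L : Polynomial ℝ →ₗ[ℝ] ℝ)
    (hQ0 : Q 0 = 1) (hL1 : L 1 = 1)
    (hq : ∀ n : ℕ, q (n + 1) = L (Polynomial.X * Q n))
    (hrec : ∀ n, Polynomial.X * Q n
      = Q (n + 1) + ∑ v ∈ Finset.range (n + 1), q (n + 1 - v) • Q v)
    (m : ℕ) : ∀ n, L (Q m * Q n) = (if m = 0 ∧ n = 0 then 1 else 0) +
      ∑ u ∈ Finset.range m, ∑ v ∈ Finset.range n, q (m + n - u - v) * L (Q u * Q v) := by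
  induction m with
  | zero =>
    intro n
    cases n with
    | zero => simp [hQ0, hL1]
    | succ n => simp [hQ0, aux_mean Q q L hQ0 hL1 hq hrec n]
  | succ m ih =>
    intro n
    have h1 : L (Polynomial.X * Q m * Q n) = L (Q (m + 1) * Q n)
        + ∑ u ∈ Finset.range (m + 1), q (m + 1 - u) * L (Q u * Q n) := by
      rw [hrec, add_mul, map_add, Finset.sum_mul, map_sum]
      simp
    have h2 : L (Polynomial.X * Q m * Q n) = L (Q m * Q (n + 1))
        + ∑ v ∈ Finset.range (n + 1), q (n + 1 - v) * L (Q m * Q v) := by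
      rw [show Polynomial.X * Q m * Q n = Q m * (Polynomial.X * Q n) by ring,
        hrec, mul_add, map_add, Finset.mul_sum, map_sum]
      simp
    rw [ih (n + 1)] at h2
    rw [Finset.sum_range_succ] at h1 h2
    simp only [Finset.sum_range_succ _ n, Finset.sum_add_distrib] at h2
    rw [Finset.sum_range_succ]
    have e1 : ∀ u, m + (n + 1) - u - n = m + 1 - u := by intro u; omega
    have e2 : ∀ v, m + 1 + n - m - v = n + 1 - v := by intro u; omega
    have e3 : m + 1 + n = m + (n + 1) := by omega
    simp only [e1] at h2
    simp only [e2]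
    simp only [e3]
    have e4 : m + 1 - m = 1 := by omega
    have e5 : n + 1 - n = 1 := by omega
    rw [e4] at h1
    rw [e5] at h2
    simp at h2 ⊢
    linarith

lemma aux_flip {M : Type*} [AddCommMonoid M] (t : ℕ) (H : ℕ → ℕ → M)
    (h0 : ∀ m u, t ≤ m + u → H m u = 0) :
    ∑ m ∈ Finset.range t, ∑ u ∈ Finset.range t, H m u
      = ∑ k ∈ Finset.range t, ∑ u ∈ Finset.range (k + 1), H (k - u) u := by
  rw [Finset.sum_comm, Finset.sum_range_diag_flip t (fun u m => H m u)]
  refine Finset.sum_congr rfl fun m _ => ?_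
  symm
  refine Finset.sum_subset (by intro x; simp; omega) ?_
  intro x _ hx
  apply h0
  simp at hx; omega

lemma aux_nil (t : ℕ) (Φ : Matrix (Fin t) (Fin t) ℝ)
    (hΦ : ∀ i j : Fin t, i ≤ j → Φ i j = 0) : Φ ^ t = 0 := by
  have key : ∀ (k : ℕ) (i j : Fin t), (i : ℕ) < j + k → (Φ ^ k) i j = 0 := by
    intro k
    induction k with
    | zero =>
      intro i j h
      rw [pow_zero, Matrix.one_apply_ne]
      rintro rfl; omega
    | succ k ih =>
      intro i j h
      rw [pow_succ, Matrix.mul_apply]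
      refine Finset.sum_eq_zero fun l _ => ?_
      by_cases hl : l ≤ j
      · rw [hΦ l j hl, mul_zero]
      · rw [ih i l, zero_mul]
        have : j < l := not_le.mp hl
        have : (j : ℕ) < l := this
        omega
  ext i j
  exact key t i j (by have := i.2; omega)

lemma aux_int (μ : Measure ℝ) [IsProbabilityMeasure μ]
    (K : Set ℝ) (hK : IsCompact K) (hKc : μ Kᶜ = 0) (p : Polynomial ℝ) :
    Integrable (fun x => p.eval x) μ := by
  have h : IntegrableOn (fun x => p.eval x) K μ :=
    p.continuous.continuousOn.integrableOn_compact hK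
  rwa [IntegrableOn, Measure.restrict_eq_self_of_ae_mem] at h
  exact mem_ae_iff.mpr hKc

theorem stmt13 (μ : Measure ℝ) [IsProbabilityMeasure μ]
    (K : Set ℝ) (hK : IsCompact K) (hKc : μ Kᶜ = 0)
    (Q : ℕ → Polynomial ℝ) (q : ℕ → ℝ)
    (hQ0 : Q 0 = 1) (hq0 : q 0 = 1)
    (hq : ∀ n : ℕ, 1 ≤ n → q n = ∫ x, x * (Q (n - 1)).eval x ∂μ)
    (hQrec : ∀ n : ℕ, 1 ≤ n →
      Q n = Polynomial.X * Q (n - 1) - ∑ i ∈ Finset.Icc 1 n, Polynomial.C (q i) * Q (n - i))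
    (t : ℕ) (ht : 1 ≤ t)
    (Φ : Matrix (Fin t) (Fin t) ℝ)
    (hΦ : ∀ i j : Fin t, i ≤ j → Φ i j = 0)
    (Δbar : Matrix (Fin t) (Fin t) ℝ)
    (Sig : Matrix (Fin t) (Fin t) ℝ)
    (hSig : ∀ i j : Fin t, Sig i j =
      ∫ x, ((∑ k ∈ Finset.range t, (Q (k + 1)).eval x • Φ ^ k) * Δbar *
            (∑ k ∈ Finset.range t, (Q (k + 1)).eval x • Φ ^ k)ᵀ) i j ∂μ)
    (Δ : Matrix (Fin t) (Fin t) ℝ) (hΔ : Δ = Δbar + Φ * Sig * Φᵀ) :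
    Sig = ∑ m ∈ Finset.range t, ∑ n ∈ Finset.range t,
      q ((m + 1) + (n + 1)) • (Φ ^ m * Δ * (Φ ^ n)ᵀ) := by
  have hint := aux_int μ K hK hKc
  let L : Polynomial ℝ →ₗ[ℝ] ℝ :=
    { toFun := fun p => ∫ x, p.eval x ∂μ
      map_add' := fun p r => by
        simp only [Polynomial.eval_add]
        exact integral_add (hint p) (hint r)
      map_smul' := fun a p => by
        simp only [Polynomial.eval_smul, RingHom.id_apply]
        exact integral_smul a _ }
  have hLdef : ∀ p, L p = ∫ x, p.eval x ∂μ := fun p => rfl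
  have hL1 : L 1 = 1 := by simp [hLdef]
  have hqL : ∀ n : ℕ, q (n + 1) = L (Polynomial.X * Q n) := by
    intro n
    rw [hq (n + 1) (by omega), hLdef]
    simp
  have hrec := aux_rec Q q hQrec
  have hcov := aux_cov Q q L hQ0 hL1 hqL hrec
  clear_value L
  have hnil : ∀ k, t ≤ k → Φ ^ k = 0 := fun k hk => pow_eq_zero_of_le hk (aux_nil t Φ hΦ)
  set c : ℕ → ℕ → ℝ := fun m n => L (Q m * Q n) with hc
  set G : ℕ → ℕ → Matrix (Fin t) (Fin t) ℝ := fun k l => Φ ^ k * Δbar * (Φ ^ l)ᵀ with hG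
  have hGl : ∀ k l, t ≤ k → G k l = 0 := by
    intro k l hk; simp [hG, hnil k hk]
  have hGr : ∀ k l, t ≤ l → G k l = 0 := by
    intro k l hk; simp only [hG]; rw [hnil l hk, Matrix.transpose_zero, Matrix.mul_zero]
  have hGmul : ∀ m n k l, Φ ^ m * G k l * (Φ ^ n)ᵀ = G (m + k) (n + l) := by
    intro m n k l
    simp only [hG, pow_add, Matrix.transpose_mul, Matrix.mul_assoc]
  have hS : Sig = ∑ k ∈ Finset.range t, ∑ l ∈ Finset.range t, c (k + 1) (l + 1) • G k l := by
    ext i j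
    rw [hSig]
    have : ∀ x, ((∑ k ∈ Finset.range t, (Q (k + 1)).eval x • Φ ^ k) * Δbar *
            (∑ k ∈ Finset.range t, (Q (k + 1)).eval x • Φ ^ k)ᵀ) i j
        = ∑ k ∈ Finset.range t, ∑ l ∈ Finset.range t,
          (Q (k + 1) * Q (l + 1)).eval x * G k l i j := by
      intro x
      rw [Matrix.transpose_sum, Finset.sum_mul, Finset.sum_mul]
      simp only [Finset.mul_sum, Matrix.sum_apply]
      refine Finset.sum_congr rfl fun k _ => Finset.sum_congr rfl fun l _ => ?_
      simp [hG]
      ring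
    simp only [this]
    rw [integral_finsetSum]
    · simp only [Matrix.sum_apply]
      refine Finset.sum_congr rfl fun k _ => ?_
      rw [integral_finsetSum]
      · refine Finset.sum_congr rfl fun l _ => ?_
        rw [integral_mul_const, ← hLdef]
        simp [hc]
      · intro l _
        exact (hint _).mul_const _
    · intro k _
      exact integrable_finsetSum _ fun l _ => (hint _).mul_const _
  have c00 : c 0 0 = 1 := by simp [hc, hQ0, hL1]
  have c0 : ∀ n, c 0 (n + 1) = 0 := by
    intro n; simp [hc, hQ0, aux_mean Q q L hQ0 hL1 hqL hrec n]
  have c0' : ∀ n, c (n + 1) 0 = 0 := by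
    intro n; simp [hc, hQ0, aux_mean Q q L hQ0 hL1 hqL hrec n]
  have hD : Δ = ∑ k ∈ Finset.range t, ∑ l ∈ Finset.range t, c k l • G k l := by
    have e1 : ∑ k ∈ Finset.range t, ∑ l ∈ Finset.range t, c k l • G k l
        = ∑ k ∈ Finset.range (t + 1), ∑ l ∈ Finset.range (t + 1), c k l • G k l := by
      rw [Finset.sum_range_succ _ t]
      simp only [Finset.sum_range_succ _ t]
      simp [hGl t _ le_rfl, hGr _ t le_rfl]
    rw [e1, Finset.sum_range_succ']
    simp only [Finset.sum_range_succ' _ t, c0, c0', c00]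
    rw [hΔ, hS]
    simp only [Finset.mul_sum, Finset.sum_mul]
    simp only [Matrix.mul_smul, Matrix.smul_mul]
    have := hGmul 1 1
    simp only [pow_one] at this
    simp only [this]
    simp [hG, add_comm]
  rw [hD]
  simp only [Finset.mul_sum, Finset.sum_mul, Matrix.mul_smul, Matrix.smul_mul, hGmul,
    Finset.smul_sum]
  have s1 : ∀ m, ∑ n ∈ Finset.range t, ∑ u ∈ Finset.range t, ∑ v ∈ Finset.range t,
        q (m + 1 + (n + 1)) • c u v • G (m + u) (n + v)
      = ∑ u ∈ Finset.range t, ∑ l ∈ Finset.range t, ∑ v ∈ Finset.range (l + 1),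
        q (m + 1 + (l - v + 1)) • c u v • G (m + u) (l - v + v) := by
    intro m
    rw [Finset.sum_comm]
    refine Finset.sum_congr rfl fun u _ => ?_
    exact aux_flip t (fun n v => q (m + 1 + (n + 1)) • c u v • G (m + u) (n + v))
      (fun n v h => by simp [hGr _ _ h])
  rw [Finset.sum_congr rfl fun m _ => s1 m]
  rw [aux_flip t (fun m u => ∑ l ∈ Finset.range t, ∑ v ∈ Finset.range (l + 1),
        q (m + 1 + (l - v + 1)) • c u v • G (m + u) (l - v + v))
      (fun m u h => by simp [hGl _ _ h])]
  rw [hS]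
  refine Finset.sum_congr rfl fun k _ => ?_
  rw [Finset.sum_comm]
  refine Finset.sum_congr rfl fun l _ => ?_
  have hcc : c (k + 1) (l + 1) = ∑ u ∈ Finset.range (k + 1), ∑ v ∈ Finset.range (l + 1),
      q (k + 1 + (l + 1) - u - v) * c u v := by
    have := hcov (k + 1) (l + 1)
    simpa [hc] using this
  rw [hcc]
  simp only [Finset.sum_smul]
  refine Finset.sum_congr rfl fun u hu => Finset.sum_congr rfl fun v hv => ?_
  simp only [Finset.mem_range] at hu hv
  rw [smul_smul, show k - u + u = k by omega, show l - v + v = l by omega,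
    show k + 1 + (l + 1) - u - v = k - u + 1 + (l - v + 1) by omega]
end

section
/- Let μ be a compactly supported Borel probability measure on ℝ and let (Q_n)_{n≥0}, (q_n)_{n≥0} be defined from μ as in the context. Fix integers N ≥ 1 and t ≥ 1. Let W be an arbitrary real N×N matrix, let (u_s)_{s=1}^{t} be vectors in ℝ^N, let (d_{s,i})_{1≤i≤s≤t−1} be real numbers, and let D ∈ ℝ^{t×t} be the strictly lower triangular matrix with entries D_{s,i} = d_{s−1,i} for i < s. Set B := Σ_{i=1}^{t} q_i·D^{i−1} (with D^0 := I_t), with entries b_{s,i} := B_{s,i}, and define r_s := W·u_s − Σ_{i=1}^{s} b_{s,i}·u_i for 1 ≤ s ≤ t, ū_1 := u_1, and ū_s := u_s − Σ_{i=1}^{s−1} d_{s−1,i}·r_i for 2 ≤ s ≤ t. Then for every 1 ≤ s ≤ t, r_s = Σ_{i=1}^{s} P_{s,i}(W)·ū_i, where P_{s,i}(λ) denotes the (s,i) entry of the matrix Σ_{j=1}^{t} Q_j(λ)·D^{j−1} and P_{s,i}(W) its evaluation at the matrix W. -/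
open MeasureTheory

/-- Powers of a strictly lower triangular matrix. -/
theorem pow_strict_lower {t : ℕ} (D : Matrix (Fin t) (Fin t) ℝ)
    (hD : ∀ i j : Fin t, i ≤ j → D i j = 0) (k : ℕ) :
    ∀ s i : Fin t, (s : ℕ) < i + k → (D ^ k) s i = 0 := by
  induction k with
  | zero =>
    intro s i h
    rw [pow_zero, Matrix.one_apply_ne]
    rintro rfl
    omega
  | succ k ih =>
    intro s i h
    rw [pow_succ, Matrix.mul_apply]
    refine Finset.sum_eq_zero fun j _ => ?_
    by_cases hj : (s : ℕ) < j + k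
    · rw [ih s j hj, zero_mul]
    · rw [hD j i (by rw [Fin.le_def]; omega), mul_zero]

/-- Action of a matrix of polynomials on a tuple of vectors, the variable acting by `W`. -/
noncomputable def polyAct {N t : ℕ} (W : Matrix (Fin N) (Fin N) ℝ)
    (M : Matrix (Fin t) (Fin t) (Polynomial ℝ)) (v : Fin t → Fin N → ℝ) : Fin t → Fin N → ℝ :=
  fun s => ∑ i, (Polynomial.aeval W (M s i)).mulVec (v i)

theorem polyAct_add {N t : ℕ} (W : Matrix (Fin N) (Fin N) ℝ)
    (M M' : Matrix (Fin t) (Fin t) (Polynomial ℝ)) (v : Fin t → Fin N → ℝ) :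
    polyAct W (M + M') v = polyAct W M v + polyAct W M' v := by
  funext s
  simp [polyAct, Matrix.add_mulVec, Finset.sum_add_distrib]

theorem polyAct_sub {N t : ℕ} (W : Matrix (Fin N) (Fin N) ℝ)
    (M M' : Matrix (Fin t) (Fin t) (Polynomial ℝ)) (v : Fin t → Fin N → ℝ) :
    polyAct W (M - M') v = polyAct W M v - polyAct W M' v := by
  funext s
  simp [polyAct, Matrix.sub_mulVec, Finset.sum_sub_distrib]

theorem polyAct_vadd {N t : ℕ} (W : Matrix (Fin N) (Fin N) ℝ)
    (M : Matrix (Fin t) (Fin t) (Polynomial ℝ)) (v w : Fin t → Fin N → ℝ) :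
    polyAct W M (v + w) = polyAct W M v + polyAct W M w := by
  funext s
  simp [polyAct, Matrix.mulVec_add, Finset.sum_add_distrib]

theorem polyAct_scalar {N t : ℕ} (W : Matrix (Fin N) (Fin N) ℝ)
    (p : Polynomial ℝ) (v : Fin t → Fin N → ℝ) (s : Fin t) :
    polyAct W (p • 1) v s = (Polynomial.aeval W p).mulVec (v s) := by
  unfold polyAct
  rw [Finset.sum_eq_single s]
  · simp
  · intro b _ hb
    simp [Matrix.one_apply_ne hb.symm]
  · simp

theorem polyAct_map {N t : ℕ} (W : Matrix (Fin N) (Fin N) ℝ)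
    (A : Matrix (Fin t) (Fin t) ℝ) (v : Fin t → Fin N → ℝ) (s : Fin t) :
    polyAct W (A.map Polynomial.C) v s = ∑ i, A s i • v i := by
  simp [polyAct, Algebra.algebraMap_eq_smul_one, Matrix.smul_mulVec]

theorem polyAct_mul {N t : ℕ} (W : Matrix (Fin N) (Fin N) ℝ)
    (M M' : Matrix (Fin t) (Fin t) (Polynomial ℝ)) (v : Fin t → Fin N → ℝ) :
    polyAct W (M * M') v = polyAct W M (polyAct W M' v) := by
  funext s
  simp only [polyAct, Matrix.mul_apply, map_sum, map_mul, Matrix.sum_mulVec, Matrix.mulVec_sum,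
    Matrix.mulVec_mulVec]
  rw [Finset.sum_comm]

/-- The convolution identity. -/
theorem conv_identity {t : ℕ} (Q : ℕ → Polynomial ℝ) (q : ℕ → ℝ)
    (hQrec : ∀ n : ℕ, 1 ≤ n →
      Q n = Polynomial.X * Q (n - 1) - ∑ i ∈ Finset.Icc 1 n, Polynomial.C (q i) * Q (n - i))
    (E : Matrix (Fin t) (Fin t) (Polynomial ℝ)) (hE : ∀ k, t ≤ k → E ^ k = 0) :
    ∑ j ∈ Finset.range t, Q (j + 1) • E ^ j =
      (∑ j ∈ Finset.range t, Q j • E ^ j) *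
        ((Polynomial.X : Polynomial ℝ) • 1 -
          ∑ i ∈ Finset.range t, Polynomial.C (q (i + 1)) • E ^ i) := by
  have h1 : (∑ j ∈ Finset.range t, Q j • E ^ j) *
      (∑ i ∈ Finset.range t, Polynomial.C (q (i + 1)) • E ^ i) =
      ∑ m ∈ Finset.range t, ∑ k ∈ Finset.range (m + 1),
        (Q k * Polynomial.C (q (m - k + 1))) • E ^ m := by
    have h2 : ∀ m ∈ Finset.range t, ∑ k ∈ Finset.range (m + 1),
        (Q k * Polynomial.C (q (m - k + 1))) • E ^ m = ∑ k ∈ Finset.range (m + 1),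
        (Q k * Polynomial.C (q (m - k + 1))) • E ^ (k + (m - k)) := by
      intro m _
      refine Finset.sum_congr rfl fun k hk => ?_
      rw [Finset.mem_range] at hk
      rw [show k + (m - k) = m by omega]
    rw [Finset.sum_congr rfl h2,
      Finset.sum_range_diag_flip t (fun k l => (Q k * Polynomial.C (q (l + 1))) • E ^ (k + l)),
      Finset.sum_mul_sum]
    refine Finset.sum_congr rfl fun j _ => ?_
    symm
    rw [Finset.sum_congr rfl (g := fun l => Q j • E ^ j * Polynomial.C (q (l + 1)) • E ^ l)]
    · refine Finset.sum_subset (Finset.range_mono (by omega)) fun l _ hl => ?_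
      rw [Finset.mem_range] at hl
      rw [smul_mul_smul_comm, ← pow_add, hE _ (by omega), smul_zero]
    · intro l _
      rw [smul_mul_smul_comm, ← pow_add]
  rw [mul_sub, h1, mul_smul_comm, mul_one, Finset.smul_sum, ← Finset.sum_sub_distrib]
  refine Finset.sum_congr rfl fun m _ => ?_
  rw [hQrec (m + 1) (by omega), sub_smul, ← Finset.sum_smul, smul_smul, Nat.add_sub_cancel]
  congr 2
  refine Finset.sum_bij' (fun i _ => m + 1 - i) (fun k _ => m + 1 - k) ?_ ?_ ?_ ?_ ?_
  · intro i hi; simp only [Finset.mem_Icc, Finset.mem_range] at *; omega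
  · intro i hi; simp only [Finset.mem_Icc, Finset.mem_range] at *; omega
  · intro i hi; simp only [Finset.mem_Icc] at *; omega
  · intro i hi; simp only [Finset.mem_range] at *; omega
  · intro i hi
    simp only [Finset.mem_Icc] at hi
    rw [mul_comm, show m - (m + 1 - i) + 1 = i by omega]

theorem stmt14 (μ : Measure ℝ) [IsProbabilityMeasure μ]
    (K : Set ℝ) (hK : IsCompact K) (hKc : μ Kᶜ = 0)
    (Q : ℕ → Polynomial ℝ) (q : ℕ → ℝ)
    (hQ0 : Q 0 = 1) (hq0 : q 0 = 1)
    (hq : ∀ n : ℕ, 1 ≤ n → q n = ∫ x, x * (Q (n - 1)).eval x ∂μ)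
    (hQrec : ∀ n : ℕ, 1 ≤ n →
      Q n = Polynomial.X * Q (n - 1) - ∑ i ∈ Finset.Icc 1 n, Polynomial.C (q i) * Q (n - i))
    (N t : ℕ) (hN : 1 ≤ N) (ht : 1 ≤ t)
    (W : Matrix (Fin N) (Fin N) ℝ)
    (u r ubar : Fin t → Fin N → ℝ)
    (D : Matrix (Fin t) (Fin t) ℝ)
    (hD : ∀ i j : Fin t, i ≤ j → D i j = 0)
    (B : Matrix (Fin t) (Fin t) ℝ)
    (hB : B = ∑ i ∈ Finset.range t, q (i + 1) • D ^ i)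
    (hr : ∀ s : Fin t,
      r s = W.mulVec (u s) - ∑ i ∈ Finset.univ.filter (fun i => i ≤ s), B s i • u i)
    (hubar : ∀ s : Fin t,
      ubar s = u s - ∑ i ∈ Finset.univ.filter (fun i => i < s), D s i • r i) :
    ∀ s : Fin t,
      r s = ∑ i ∈ Finset.univ.filter (fun i => i ≤ s),
        (Polynomial.aeval W
          ((∑ j ∈ Finset.range t, Q (j + 1) • (D ^ j).map Polynomial.C) s i)).mulVec (ubar i) := by
  have hDt : ∀ k, t ≤ k → D ^ k = 0 := by
    intro k hk
    ext s i
    exact pow_strict_lower D hD k s i (by omega)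
  have hmap : ∀ k, (D ^ k).map Polynomial.C = (D.map Polynomial.C) ^ k := fun k =>
    Matrix.map_pow (f := Polynomial.C) D k
  set E := D.map (Polynomial.C : ℝ →+* Polynomial ℝ) with hEdef
  have hE : ∀ k, t ≤ k → E ^ k = 0 := by
    intro k hk
    rw [← hmap, hDt k hk]
    ext; simp
  have hBE : B.map Polynomial.C = ∑ i ∈ Finset.range t, Polynomial.C (q (i + 1)) • E ^ i := by
    rw [hB]
    simp only [← hmap]
    ext s i : 2
    simp [Matrix.sum_apply]
  have hBlow : ∀ s i : Fin t, s < i → B s i = 0 := by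
    intro s i h
    rw [hB, Matrix.sum_apply]
    refine Finset.sum_eq_zero fun k _ => ?_
    rw [Matrix.smul_apply, pow_strict_lower D hD k s i (by rw [Fin.lt_def] at h; omega), smul_zero]
  have hr' : r = polyAct W ((Polynomial.X : Polynomial ℝ) • 1 - B.map Polynomial.C) u := by
    funext s
    rw [polyAct_sub, Pi.sub_apply, polyAct_scalar, polyAct_map, Polynomial.aeval_X, hr s]
    congr 1
    refine Finset.sum_subset (Finset.subset_univ _) fun i _ hi => ?_
    rw [hBlow s i (by simpa using hi), zero_smul]
  have hu' : u = ubar + polyAct W E r := by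
    funext s
    rw [Pi.add_apply, hEdef, polyAct_map, hubar s, sub_add_eq_add_sub, eq_sub_iff_add_eq]
    congr 1
    refine Finset.sum_subset (Finset.subset_univ _) fun i _ hi => ?_
    rw [hD s i (by simpa using hi), zero_smul]
  set P := ∑ j ∈ Finset.range t, Q (j + 1) • (D ^ j).map Polynomial.C with hP
  have hPE : P = ∑ j ∈ Finset.range t, Q (j + 1) • E ^ j := by
    rw [hP]
    simp only [hmap]
  have hid := conv_identity Q q hQrec E hE
  rw [← hPE, ← hBE] at hid
  have hid2 : ∑ j ∈ Finset.range t, Q j • E ^ j = (1 : Polynomial ℝ) • 1 + P * E := by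
    have h1 := Finset.sum_range_succ (fun j => Q j • E ^ j) t
    rw [Finset.sum_range_succ'] at h1
    simp only [hE t le_rfl, smul_zero, add_zero, pow_zero, hQ0] at h1
    rw [← h1, hPE, Finset.sum_mul, add_comm]
    simp only [smul_mul_assoc, pow_succ]
  have key : r = polyAct W P ubar := by
    have e1 : polyAct W (∑ j ∈ Finset.range t, Q j • E ^ j) r = polyAct W P u := by
      conv_lhs => rw [hr']
      rw [← polyAct_mul, ← hid]
    have e2 : polyAct W ((1 : Polynomial ℝ) • 1) r = r := by
      funext s
      rw [polyAct_scalar, map_one, Matrix.one_mulVec]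
    rw [hid2, polyAct_add, e2, hu', polyAct_vadd, ← polyAct_mul] at e1
    exact add_right_cancel e1
  intro s
  conv_lhs => rw [key]
  unfold polyAct
  symm
  refine Finset.sum_subset (Finset.subset_univ _) fun i _ hi => ?_
  have h0 : P s i = 0 := by
    rw [hP, Matrix.sum_apply]
    refine Finset.sum_eq_zero fun k _ => ?_
    have h : s < i := by simpa using hi
    rw [Matrix.smul_apply, Matrix.map_apply,
      pow_strict_lower D hD k s i (by rw [Fin.lt_def] at h; omega), map_zero, smul_zero]
  rw [h0, map_zero, Matrix.zero_mulVec]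
end

section
/- Let μ be a compactly supported Borel probability measure on ℝ, let f : ℝ → ℝ be continuous, and let (K_n)_{n≥0}, (κ̃_n)_{n≥1} be defined from μ and f as in the context. Fix t ≥ 1, let Φ ∈ ℝ^{t×t} be strictly lower triangular, and set E := Σ_{i=1}^{t} κ̃_i·Φ^{i−1} (with Φ^0 := I_t). Then: (a) for every λ ∈ ℝ, the matrix I_t − f(λ)·Φ + E·Φ is lower triangular with unit diagonal, hence invertible, and (I_t − f(λ)·Φ + E·Φ)^{−1}·(f(λ)·I_t − E) = Σ_{i=1}^{t} K_i(λ)·Φ^{i−1}; (b) ∫ K_n(λ) dμ(λ) = 0 for every n ≥ 1, so that ∫ (I_t − f(λ)·Φ + E·Φ)^{−1}·(f(λ)·I_t − E) dμ(λ) = 0 entrywise. -/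
open MeasureTheory

lemma aux_pow {t : ℕ} (Φ : Matrix (Fin t) (Fin t) ℝ)
    (hΦ : ∀ i j : Fin t, i ≤ j → Φ i j = 0) (n : ℕ) :
    ∀ i j : Fin t, (i : ℕ) < j + n → (Φ ^ n) i j = 0 := by
  induction n with
  | zero =>
    intro i j h
    rw [pow_zero, Matrix.one_apply_ne]
    intro h'
    subst h'
    omega
  | succ n ih =>
    intro i j h
    rw [pow_succ, Matrix.mul_apply]
    refine Finset.sum_eq_zero fun k _ => ?_
    by_cases hk : k ≤ j
    · rw [hΦ k j hk, mul_zero]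
    · have : (j : ℕ) < k := by
        simpa using hk
      rw [ih i k (by omega), zero_mul]

lemma aux_trunc {t : ℕ} (Φ : Matrix (Fin t) (Fin t) ℝ) (hΦ : Φ ^ t = 0)
    (p q : PowerSeries ℝ) :
    Polynomial.aeval Φ (PowerSeries.trunc t (p * q)) =
      Polynomial.aeval Φ (PowerSeries.trunc t p) * Polynomial.aeval Φ (PowerSeries.trunc t q) := by
  have hd : (Polynomial.X : Polynomial ℝ) ^ t ∣
      PowerSeries.trunc t p * PowerSeries.trunc t q - PowerSeries.trunc t (p * q) := by
    rw [Polynomial.X_pow_dvd_iff]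
    intro d hd
    rw [Polynomial.coeff_sub, PowerSeries.coeff_trunc, if_pos hd, PowerSeries.coeff_mul,
      Polynomial.coeff_mul, sub_eq_zero]
    refine Finset.sum_congr rfl fun x hx => ?_
    have := Finset.HasAntidiagonal.mem_antidiagonal.1 hx
    rw [PowerSeries.coeff_trunc, PowerSeries.coeff_trunc, if_pos (by omega), if_pos (by omega)]
  obtain ⟨r, hr⟩ := hd
  have := congrArg (Polynomial.aeval Φ) hr
  rw [map_sub, map_mul (Polynomial.aeval Φ), map_mul (Polynomial.aeval Φ) (Polynomial.X ^ t),
    map_pow, Polynomial.aeval_X, hΦ, zero_mul, sub_eq_zero] at this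
  exact this.symm

lemma aux_mk {t : ℕ} (Φ : Matrix (Fin t) (Fin t) ℝ) (a : ℕ → ℝ) :
    Polynomial.aeval Φ (PowerSeries.trunc t (PowerSeries.mk a)) =
      ∑ i ∈ Finset.range t, a i • Φ ^ i := by
  have h : PowerSeries.trunc t (PowerSeries.mk a) =
      ∑ i ∈ Finset.range t, Polynomial.monomial i (a i) := by
    ext n
    simp [PowerSeries.coeff_trunc, Polynomial.finsetSum_coeff, Polynomial.coeff_monomial]
  rw [h, map_sum]
  simp [Polynomial.aeval_monomial, Algebra.smul_def]

lemma aux_alg {t : ℕ} (ht : 1 ≤ t) (Φ : Matrix (Fin t) (Fin t) ℝ) (hΦ : Φ ^ t = 0)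
    (c : ℝ) (k κ : ℕ → ℝ) (h0 : k 0 = 1)
    (hrec : ∀ n, k (n + 1) = c * k n - ∑ i ∈ Finset.range (n + 1), κ (i + 1) * k (n - i)) :
    ((1 : Matrix (Fin t) (Fin t) ℝ) - c • Φ + (∑ i ∈ Finset.range t, κ (i + 1) • Φ ^ i) * Φ) *
      (∑ i ∈ Finset.range t, k (i + 1) • Φ ^ i) =
    c • 1 - ∑ i ∈ Finset.range t, κ (i + 1) • Φ ^ i := by
  set e : PowerSeries ℝ := PowerSeries.mk fun i => κ (i + 1) with he
  set s : PowerSeries ℝ := PowerSeries.mk fun i => k (i + 1) with hs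
  set K : PowerSeries ℝ := PowerSeries.mk k with hK
  have h1 : s = (PowerSeries.C c - e) * K := by
    ext n
    rw [sub_mul, map_sub, PowerSeries.coeff_C_mul, PowerSeries.coeff_mul,
      Finset.Nat.sum_antidiagonal_eq_sum_range_succ_mk]
    simp only [hs, hK, he, PowerSeries.coeff_mk]
    exact hrec n
  have h2 : K = 1 + PowerSeries.X * s := by
    ext n
    cases n with
    | zero => simp [hK, h0]
    | succ n => simp [hK, hs, PowerSeries.coeff_succ_X_mul, PowerSeries.coeff_one]
  have h3 : s + (e - PowerSeries.C c) * (PowerSeries.X * s) = PowerSeries.C c - e := by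
    have : s = (PowerSeries.C c - e) * (1 + PowerSeries.X * s) := by rw [← h2]; exact h1
    linear_combination this
  have hX : Polynomial.aeval Φ (PowerSeries.trunc t (PowerSeries.X : PowerSeries ℝ)) = Φ := by
    rcases Nat.lt_or_ge 1 t with h | h
    · obtain ⟨m, rfl⟩ : ∃ m, t = m + 2 := ⟨t - 2, by omega⟩
      rw [PowerSeries.trunc_X, Polynomial.aeval_X]
    · obtain rfl : t = 1 := by omega
      rw [pow_one] at hΦ
      rw [hΦ]
      have h : PowerSeries.trunc 1 (PowerSeries.X : PowerSeries ℝ) = 0 := by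
        ext n
        rw [PowerSeries.coeff_trunc, PowerSeries.coeff_X, Polynomial.coeff_zero]
        split_ifs <;> first | rfl | omega
      rw [h, map_zero]
  have hC : Polynomial.aeval Φ (PowerSeries.trunc t (PowerSeries.C c : PowerSeries ℝ)) =
      c • (1 : Matrix (Fin t) (Fin t) ℝ) := by
    obtain ⟨m, rfl⟩ : ∃ m, t = m + 1 := ⟨t - 1, by omega⟩
    rw [PowerSeries.trunc_C, Polynomial.aeval_C, Algebra.algebraMap_eq_smul_one]
  have h4 := congrArg (fun p => Polynomial.aeval Φ (PowerSeries.trunc t p)) h3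
  simp only [map_add, map_sub, aux_trunc Φ hΦ, hX, hC] at h4
  rw [aux_mk, aux_mk] at h4
  rw [← h4]
  simp only [sub_mul, add_mul, one_mul, smul_mul_assoc, mul_assoc]
  abel

theorem stmt18 (μ : Measure ℝ) [IsProbabilityMeasure μ]
    (K : Set ℝ) (hK : IsCompact K) (hKc : μ Kᶜ = 0)
    (f : ℝ → ℝ) (hf : Continuous f)
    (Kf : ℕ → ℝ → ℝ) (κ : ℕ → ℝ)
    (hKf0 : ∀ x : ℝ, Kf 0 x = 1)
    (hκ : ∀ n : ℕ, 1 ≤ n → κ n = ∫ x, f x * Kf (n - 1) x ∂μ)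
    (hKfrec : ∀ n : ℕ, 1 ≤ n → ∀ x : ℝ,
      Kf n x = f x * Kf (n - 1) x - ∑ i ∈ Finset.Icc 1 n, κ i * Kf (n - i) x)
    (t : ℕ) (ht : 1 ≤ t)
    (Φ : Matrix (Fin t) (Fin t) ℝ)
    (hΦ : ∀ i j : Fin t, i ≤ j → Φ i j = 0)
    (E : Matrix (Fin t) (Fin t) ℝ)
    (hE : E = ∑ i ∈ Finset.range t, κ (i + 1) • Φ ^ i) :
    (∀ x : ℝ,
        (∀ i j : Fin t, i < j →
          ((1 : Matrix (Fin t) (Fin t) ℝ) - f x • Φ + E * Φ) i j = 0) ∧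
        (∀ i : Fin t,
          ((1 : Matrix (Fin t) (Fin t) ℝ) - f x • Φ + E * Φ) i i = 1) ∧
        IsUnit ((1 : Matrix (Fin t) (Fin t) ℝ) - f x • Φ + E * Φ) ∧
        ((1 : Matrix (Fin t) (Fin t) ℝ) - f x • Φ + E * Φ)⁻¹ *
            (f x • (1 : Matrix (Fin t) (Fin t) ℝ) - E) =
          ∑ i ∈ Finset.range t, Kf (i + 1) x • Φ ^ i) ∧
    (∀ n : ℕ, 1 ≤ n → (∫ x, Kf n x ∂μ) = 0) ∧
    (∀ i j : Fin t,
        (∫ x, (((1 : Matrix (Fin t) (Fin t) ℝ) - f x • Φ + E * Φ)⁻¹ *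
            (f x • (1 : Matrix (Fin t) (Fin t) ℝ) - E)) i j ∂μ) = 0) := by
  have hpow := aux_pow Φ hΦ
  have hnil : Φ ^ t = 0 := by
    ext i j
    exact hpow t i j (by omega)
  have hEΦ : ∀ i j : Fin t, i ≤ j → (E * Φ) i j = 0 := by
    intro i j hij
    rw [hE, Finset.sum_mul, Matrix.sum_apply]
    refine Finset.sum_eq_zero fun m _ => ?_
    have : (i : ℕ) ≤ j := hij
    rw [smul_mul_assoc, ← pow_succ, Matrix.smul_apply, hpow (m + 1) i j (by omega), smul_zero]
  have hA : ∀ x : ℝ,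
        (∀ i j : Fin t, i < j →
          ((1 : Matrix (Fin t) (Fin t) ℝ) - f x • Φ + E * Φ) i j = 0) ∧
        (∀ i : Fin t,
          ((1 : Matrix (Fin t) (Fin t) ℝ) - f x • Φ + E * Φ) i i = 1) ∧
        IsUnit ((1 : Matrix (Fin t) (Fin t) ℝ) - f x • Φ + E * Φ) ∧
        ((1 : Matrix (Fin t) (Fin t) ℝ) - f x • Φ + E * Φ)⁻¹ *
            (f x • (1 : Matrix (Fin t) (Fin t) ℝ) - E) =
          ∑ i ∈ Finset.range t, Kf (i + 1) x • Φ ^ i := by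
    intro x
    have a1 : ∀ i j : Fin t, i < j →
          ((1 : Matrix (Fin t) (Fin t) ℝ) - f x • Φ + E * Φ) i j = 0 := by
      intro i j hij
      rw [Matrix.add_apply, Matrix.sub_apply, Matrix.smul_apply, hEΦ i j hij.le, hΦ i j hij.le,
        Matrix.one_apply_ne hij.ne]
      simp
    have a2 : ∀ i : Fin t,
          ((1 : Matrix (Fin t) (Fin t) ℝ) - f x • Φ + E * Φ) i i = 1 := by
      intro i
      rw [Matrix.add_apply, Matrix.sub_apply, Matrix.smul_apply, hEΦ i i le_rfl, hΦ i i le_rfl,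
        Matrix.one_apply_eq]
      simp
    have hdet : ((1 : Matrix (Fin t) (Fin t) ℝ) - f x • Φ + E * Φ).det = 1 := by
      rw [Matrix.det_of_isLowerTriangular _ (fun i j hij => a1 i j hij)]
      exact Finset.prod_eq_one fun i _ => a2 i
    have hu : IsUnit ((1 : Matrix (Fin t) (Fin t) ℝ) - f x • Φ + E * Φ).det := by
      rw [hdet]; exact isUnit_one
    refine ⟨a1, a2, (Matrix.isUnit_iff_isUnit_det _).2 hu, ?_⟩
    have key := aux_alg ht Φ hnil (f x) (fun n => Kf n x) κ (hKf0 x) (by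
      intro n
      have h := hKfrec (n + 1) (by omega) x
      rw [← Finset.Ico_succ_right_eq_Icc, Finset.sum_Ico_eq_sum_range] at h
      simp only [h, Nat.add_sub_cancel]
      congr 1
      refine Finset.sum_congr (by simp) fun i _ => ?_
      rw [add_comm 1 i, Nat.add_sub_add_right])
    rw [← hE] at key
    rw [← key, Matrix.nonsing_inv_mul_cancel_left _ _ hu]
  have hcont : ∀ n, Continuous (Kf n) := by
    intro n
    induction n using Nat.strong_induction_on with
    | _ n ih =>
      rcases Nat.eq_zero_or_pos n with rfl | hn
      · rw [show Kf 0 = fun _ => 1 from funext hKf0]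
        exact continuous_const
      · rw [show Kf n = _ from funext (hKfrec n hn)]
        refine (hf.mul (ih _ (by omega))).sub (continuous_finsetSum _ fun i hi => ?_)
        have := Finset.mem_Icc.1 hi
        exact continuous_const.mul (ih _ (by omega))
  have hint : ∀ g : ℝ → ℝ, Continuous g → Integrable g μ := by
    intro g hg
    have h : IntegrableOn g K μ := hg.continuousOn.integrableOn_compact hK
    rwa [IntegrableOn, Measure.restrict_eq_self_of_ae_mem] at h
    exact hKc
  have hzero : ∀ n : ℕ, 1 ≤ n → (∫ x, Kf n x ∂μ) = 0 := by
    intro n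
    induction n using Nat.strong_induction_on with
    | _ n ih =>
      intro hn
      simp_rw [hKfrec n hn]
      have i1 : Integrable (fun x => f x * Kf (n - 1) x) μ := hint _ (hf.mul (hcont _))
      have i2 : ∀ i ∈ Finset.Icc 1 n, Integrable (fun x => κ i * Kf (n - i) x) μ :=
        fun i _ => hint _ (continuous_const.mul (hcont _))
      rw [integral_sub i1 (integrable_finsetSum _ i2), integral_finsetSum _ i2, ← hκ n hn,
        Finset.sum_eq_single n]
      · simp [hKf0]
      · intro i hi hin
        have := Finset.mem_Icc.1 hi
        rw [integral_const_mul, ih (n - i) (by omega) (by omega), mul_zero]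
      · intro h
        exact absurd (Finset.mem_Icc.2 ⟨hn, le_rfl⟩) h
  refine ⟨hA, hzero, fun i j => ?_⟩
  simp_rw [fun x => (hA x).2.2.2, Matrix.sum_apply, Matrix.smul_apply, smul_eq_mul]
  rw [integral_finsetSum _ (fun m _ => (hint _ (hcont _)).mul_const _)]
  refine Finset.sum_eq_zero fun m _ => ?_
  rw [integral_mul_const, hzero _ (by omega), zero_mul]
end
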